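/- Let m ≥ 4 and q = 2^m. Let f : F_{q²} → F_{q²} be given by f(x) = x^{3q} + a₁x^{2q+1} + a₂x^{q+2} + a₃x³ where a₁ ∈ F_q, a₂ ∈ F_{q²}*, a₃ ∈ F_{q²}, and assume a₁/a₂ ∈ U. If f is APN, then m is even, and furthermore either a₁, a₂, a₃ ∈ F_q, or there exist u, z ∈ U such that a₁ = (u³+z)²/(u(u²+z)²), a₂ = (u³+z)²/(u²+z)², and a₃ = uz²(u+1)²/(u²+z)². -/

import Mathlib

/-- `f` is almost perfect nonlinear (APN): for every `a ≠ 0` and every `b`, the equation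
`f (x + a) + f x = b` has at most two solutions `x`. -/
def IsAPN {F : Type*} [Field F] (f : F → F) : Prop :=
  ∀ a : F, a ≠ 0 → ∀ b : F, {x : F | f (x + a) + f x = b}.ncard ≤ 2

/-- `L` is an affine permutation: it is bijective and `x ↦ L x - L 0` is additive
(over a field of characteristic 2, additive maps are exactly the `𝔽₂`-linear ones). -/
def IsAffinePerm {F : Type*} [Field F] (L : F → F) : Prop :=
  Function.Bijective L ∧ ∀ x y : F, L (x + y) + L 0 = L x + L y

/-- `f` and `g` are affine equivalent: `g = L₁ ∘ f ∘ L₂` for affine permutations `L₁, L₂`. -/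
def AffEquiv {F : Type*} [Field F] (f g : F → F) : Prop :=
  ∃ L₁ L₂ : F → F, IsAffinePerm L₁ ∧ IsAffinePerm L₂ ∧ ∀ x : F, g x = L₁ (f (L₂ x))

lemma AX.coreA {F : Type*} [Field F] [CharP F 2] (a u r r' k t : F)
    (hu : u ≠ 0) (ht : t ≠ 0) (h1 : t + r ≠ 0) (h2 : t + r' ≠ 0)
    (hk : a * (r + r') = k + r * r') :
    (t^3 + a*t^2 + u*a*t + u*k) * (t*(t+u)*((t^2+u*r)*(t^2+u*r'))/(u^2*((t+r)*(t+r'))^2))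
     = (t^3+a*t^2)*(((t^2+u*r)*(t^2+u*r'))/(u*t*((t+r)*(t+r'))))^2
       + (t^3+u*a*t)*(((t^2+u*r)*(t^2+u*r'))/(u*t*((t+r)*(t+r')))) := by
  have h2' : (2:F) = 0 := CharTwo.two_eq_zero
  have key : (t^3 + a*t^2 + u*a*t + u*k) * (t*(t+u)) =
      (t+a)*((t^2+u*r)*(t^2+u*r')) + (t^2+u*a)*(u*((t+r)*(t+r'))) := by
    grind
  generalize hB : (t^2+u*r)*(t^2+u*r') = B at *
  have hA : (t+r)*(t+r') ≠ 0 := mul_ne_zero h1 h2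
  generalize (t+r)*(t+r') = A at *
  field_simp
  linear_combination B * key

lemma AX.coreC {F : Type*} [Field F] [CharP F 2] (σ : F →+* F) (u r r' t : F)
    (hu : u * σ u = 1) (ht : t * σ t = 1) (h1 : t + r ≠ 0) (h2 : t + r' ≠ 0)
    (hn : r * r' * σ (r * r') = 1) (hp : σ (r + r') * (r * r') = r + r')
    (s Y : F) (hs : s = ((t^2+u*r)*(t^2+u*r'))/(u*t*((t+r)*(t+r'))))
    (hY : Y = t*(t+u)*((t^2+u*r)*(t^2+u*r'))/(u^2*((t+r)*(t+r'))^2)) :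
    σ s = s ∧ σ Y + Y = s^2 + s := by
  have h2' : (2:F) = 0 := CharTwo.two_eq_zero
  have hA : (t+r)*(t+r') ≠ 0 := mul_ne_zero h1 h2
  have hu0 : u ≠ 0 := left_ne_zero_of_mul_eq_one hu
  have ht0 : t ≠ 0 := left_ne_zero_of_mul_eq_one ht
  have hn0 : r * r' ≠ 0 := left_ne_zero_of_mul_eq_one hn
  have eu : σ u = 1/u := by field_simp; linear_combination hu
  have et : σ t = 1/t := by field_simp; linear_combination ht
  have en : σ (r*r') = 1/(r*r') := by rw [eq_div_iff hn0]; linear_combination hn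
  have ep : σ (r+r') = (r+r')/(r*r') := by rw [eq_div_iff hn0]; linear_combination hp
  have hAe : (t+r)*(t+r') = t^2 + (r+r')*t + r*r' := by ring
  have hBe : (t^2+u*r)*(t^2+u*r') = t^4 + u*(r+r')*t^2 + u^2*(r*r') := by ring
  rw [hAe] at hA hs hY
  rw [hBe] at hs hY
  generalize r + r' = p at *
  generalize r * r' = n at *
  have hsA : σ (t^2 + p*t + n) = (t^2+p*t+n)/(t^2*n) := by
    simp only [map_add, map_mul, map_pow, et, en, ep]; field_simp; ring
  have hsB : σ (t^4 + u*p*t^2 + u^2*n) = (t^4 + u*p*t^2 + u^2*n)/(t^4*u^2*n) := by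
    simp only [map_add, map_mul, map_pow, et, en, ep, eu]; field_simp; ring
  have key : (t^4 + u*p*t^2 + u^2*n) + u*t*(t^2+p*t+n) = (t+u)*(t^3+u*n) := by grind
  generalize t^2+p*t+n = A at *
  generalize t^4 + u*p*t^2 + u^2*n = B at *
  have e1 : σ s = s := by
    rw [hs]; simp only [map_mul, map_div₀, et, eu, hsA, hsB]; field_simp
  refine ⟨e1, ?_⟩
  have : σ Y = (t+u)*n*B/(t^2*u*A^2) := by
    rw [hY]; simp only [map_add, map_mul, map_pow, map_div₀, et, eu, hsA, hsB]; field_simp; ring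
  rw [this, hs, hY]
  field_simp
  linear_combination -B*key

/-- partial fractions -/
lemma AX.pfY {F : Type*} [Field F] [CharP F 2] (u r r' t : F)
    (hu : u ≠ 0) (h1 : t + r ≠ 0) (h2 : t + r' ≠ 0) (hd : r + r' ≠ 0) :
    t*(t+u)*((t^2+u*r)*(t^2+u*r'))/(u^2*((t+r)*(t+r'))^2) =
     (t/u+(r+r')/u)^2 + (t/u+(r+r')/u) 
      + (r^2*(r+u)^2*(r^2+u*r')/(u^2*(r+r')^2) / (t+r)^2 
        + (r+u)*(r^2+u*r')*r/(u*(r+r')^2) / (t+r))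
      + (r'^2*(r'+u)^2*(r'^2+u*r)/(u^2*(r+r')^2) / (t+r')^2 
        + (r'+u)*(r'^2+u*r)*r'/(u*(r+r')^2) / (t+r')) := by
  have h2' : (2:F) = 0 := CharTwo.two_eq_zero
  field_simp
  grind

lemma AX.pfS {F : Type*} [Field F] [CharP F 2] (u r r' t : F)
    (hu : u ≠ 0) (ht : t ≠ 0) (h1 : t + r ≠ 0) (h2 : t + r' ≠ 0) (hd : r + r' ≠ 0) :
    ((t^2+u*r)*(t^2+u*r'))/(u*t*((t+r)*(t+r'))) =
     (t/u+(r+r')/u) + u/t + (r+u)*(r^2+u*r')/(u*(r+r'))/(t+r)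
       + (r'+u)*(r'^2+u*r)/(u*(r+r'))/(t+r') := by
  have h2' : (2:F) = 0 := CharTwo.two_eq_zero
  field_simp
  grind

structure AX.Ctx {F : Type*} [Field F] (σ : F →+* F) (tr : F →+ F) (a₁ a₂ a₃ : F) : Prop where
  inv : ∀ x, σ (σ x) = x
  tr1 : ∀ g, tr (g^2+g) = σ g + g
  tr2 : ∀ g, tr (g^2) = (tr g)^2
  as : ∀ k, tr k + σ (tr k) = 0 → ∃ y, y^2 + y = k
  apn : ∀ t y, t * σ t = 1 → t^3*((σ y)^2+σ y) + a₁*t^2*((σ y)^2+y) + a₂*t*(σ y + y^2)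
    + a₃*(y^2+y) = 0 → y = 0 ∨ y = 1
  big : ∃ y, σ y = y ∧ y ≠ 0 ∧ y ≠ 1

lemma AX.L3 {F : Type*} [Field F] [CharP F 2] {σ : F →+* F} {tr : F →+ F} {a₁ a₂ a₃ : F}
    (h : AX.Ctx σ tr a₁ a₂ a₃) (t s Y : F) (ht : t * σ t = 1) (hs : σ s = s) (hs0 : s ≠ 0)
    (hY : (t^3 + a₁*t^2 + a₂*t + a₃) * Y = (t^3+a₁*t^2)*s^2 + (t^3+a₂*t)*s)
    (hYs : σ Y + Y = s^2 + s) : tr Y = s + 1 := by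
  have h2' : (2:F) = 0 := CharTwo.two_eq_zero
  have e1 : (tr Y + s) * (tr Y + (s + 1)) = 0 := by
    have h1 := h.tr1 Y
    rw [map_add, h.tr2, hYs] at h1
    linear_combination h1 + (tr Y * s + s^2 + s) * h2'
  rcases mul_eq_zero.1 e1 with e | e
  · exfalso
    have e : tr Y = s := by linear_combination e - s * h2'
    obtain ⟨y, hy⟩ := h.as Y (by rw [e, hs]; linear_combination s * h2')
    have hsy : σ y = s + y := by
      have := h.tr1 y
      rw [hy, e] at this
      grind
    rcases h.apn t y ht (by rw [hsy]; rw [← hy] at hY; grind) with e | e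
    · rw [e] at hsy; simp at hsy; exact hs0 hsy.symm
    · rw [e] at hsy; simp at hsy; exact hs0 hsy
  · linear_combination e - (s+1) * h2'

lemma AX.L4 {F : Type*} [Field F] [CharP F 2] {σ : F →+* F} {tr : F →+ F} {a₁ a₂ a₃ : F}
    (h : AX.Ctx σ tr a₁ a₂ a₃) (t : F) (ht : t * σ t = 1)
    (hD : (a₂*t+a₃)*(1+σ a₁*t+σ a₂*t^2+σ a₃*t^3) 
      + (1 + σ a₁*t)*(t^3 + a₁*t^2 + a₂*t + a₃) = 0)
    (hN : (a₁*t^2+a₃)*(1+σ a₁*t+σ a₂*t^2+σ a₃*t^3) 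
      + (1 + σ a₂*t^2)*(t^3 + a₁*t^2 + a₂*t + a₃) = 0) : False := by
  have h2' : (2:F) = 0 := CharTwo.two_eq_zero
  obtain ⟨y, hy, hy0, hy1⟩ := h.big
  have ht0 : t ≠ 0 := left_ne_zero_of_mul_eq_one ht
  have et : σ t = 1/t := by field_simp; linear_combination ht
  have hP : t^3 + a₁*t^2 + a₂*t + a₃ ≠ 0 := by
    intro hP
    rcases h.apn t y ht (by rw [hy]; linear_combination (y^2+y)*hP) with e | e
    · exact hy0 e
    · exact hy1 e
  have hsP : σ (t^3 + a₁*t^2 + a₂*t + a₃) = (1+σ a₁*t+σ a₂*t^2+σ a₃*t^3)/t^3 := by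
    simp only [map_add, map_mul, map_pow, et]; field_simp
  have hPs : (1+σ a₁*t+σ a₂*t^2+σ a₃*t^3) ≠ 0 := by
    intro e
    rw [e, zero_div, map_eq_zero] at hsP
    exact hP hsP
  have main : ∀ s, σ s = s → s ≠ 0 →
      tr (((t^3+a₁*t^2)*s^2 + (t^3+a₂*t)*s)/(t^3 + a₁*t^2 + a₂*t + a₃)) = s + 1 := by
    intro s hs hs0
    apply AX.L3 h t s _ ht hs hs0
    · rw [mul_div_cancel₀ _ hP]
    · rw [map_div₀, hsP]
      have : σ ((t^3+a₁*t^2)*s^2 + (t^3+a₂*t)*s) = ((1+σ a₁*t)*s^2+(1+σ a₂*t^2)*s)/t^3 := by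
        simp only [map_add, map_mul, map_pow, et, hs]; field_simp
      rw [this]
      clear this hsP
      rw [div_div_div_cancel_right₀ (pow_ne_zero 3 ht0), div_add_div _ _ hPs hP,
        div_eq_iff (mul_ne_zero hPs hP)]
      linear_combination s^2*hD + s*hN - (s^2*(a₂*t+a₃)+s*(a₁*t^2+a₃))
        * (1+σ a₁*t+σ a₂*t^2+σ a₃*t^3) * h2'
  have m1 := main 1 (map_one σ) one_ne_zero
  have m2 := main y hy hy0
  have m3 := main (y+1) (by rw [map_add, hy, map_one]) (by
    intro e; apply hy1; linear_combination e - h2')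
  have : ((t^3+a₁*t^2)*(y+1)^2 + (t^3+a₂*t)*(y+1))/(t^3 + a₁*t^2 + a₂*t + a₃)
    = ((t^3+a₁*t^2)*1^2 + (t^3+a₂*t)*1)/(t^3 + a₁*t^2 + a₂*t + a₃)
     + ((t^3+a₁*t^2)*y^2 + (t^3+a₂*t)*y)/(t^3 + a₁*t^2 + a₂*t + a₃) := by
    rw [← add_div]; congr 1; linear_combination (t^3+a₁*t^2)*y*h2'
  rw [this, map_add, m1, m2] at m3
  have : (1:F) = 0 := by linear_combination m3
  exact one_ne_zero this

/-- the standing hypotheses on the roots -/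
structure AX.Rt {F : Type*} [Field F] (σ : F →+* F) (u r r' : F) : Prop where
  hu : u * σ u = 1
  hn : r * r' * σ (r * r') = 1
  hp : σ (r + r') * (r * r') = r + r'

lemma AX.G1 {F : Type*} [Field F] [CharP F 2] {σ : F →+* F} {tr : F →+ F} {a u r r' k : F}
    (h : AX.Ctx σ tr a (u*a) (u*k)) (hR : AX.Rt σ u r r') (hk : a * (r + r') = k + r * r')
    (t : F) (ht : t * σ t = 1) (h1 : t + r ≠ 0) (h2 : t + r' ≠ 0) :
    ((t^2+u*r)*(t^2+u*r') ≠ 0 → 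
     tr (t*(t+u)*((t^2+u*r)*(t^2+u*r'))/(u^2*((t+r)*(t+r'))^2)) + 
      ((t^2+u*r)*(t^2+u*r'))/(u*t*((t+r)*(t+r'))) = 1) ∧ 
    ((t^2+u*r)*(t^2+u*r') = 0 → 
     tr (t*(t+u)*((t^2+u*r)*(t^2+u*r'))/(u^2*((t+r)*(t+r'))^2)) + 
      ((t^2+u*r)*(t^2+u*r'))/(u*t*((t+r)*(t+r'))) = 0) := by
  have h2' : (2:F) = 0 := CharTwo.two_eq_zero
  have hu0 : u ≠ 0 := left_ne_zero_of_mul_eq_one hR.hu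
  have ht0 : t ≠ 0 := left_ne_zero_of_mul_eq_one ht
  constructor
  · intro hB
    obtain ⟨c1, c2⟩ := AX.coreC σ u r r' t hR.hu ht h1 h2 hR.hn hR.hp _ _ rfl rfl
    rw [AX.L3 h t _ _ ht c1 ?_ (AX.coreA a u r r' k t hu0 ht0 h1 h2 hk) c2]
    · linear_combination ((t^2+u*r)*(t^2+u*r'))/(u*t*((t+r)*(t+r'))) * h2'
    · apply div_ne_zero hB
      positivity
  · intro hB
    rw [hB]; simp

/-- the double pole case -/
lemma AX.double {F : Type*} [Field F] [CharP F 2] [DecidableEq F] {σ : F →+* F} {tr : F →+ F} {a u r k : F}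
    (h : AX.Ctx σ tr a (u*a) (u*k)) (hu : u * σ u = 1) (hr : r * σ r = 1) (hk : k = r * r)
    (hur : u ≠ r) (K : Finset F) (hK : ∀ x, x ∈ K ↔ σ x = x)
    (hsum : ∀ η X : F, ∀ j ≤ 4, ∑ x ∈ K, (η * x + X)^j = 0)
    (hsq : ∀ x : F, ∃ y, y^2 = x)
    (h90 : ∀ t : F, t * σ t = 1 → ∃ v, v ≠ 0 ∧ σ v = t * v) : False := by
  have h2' : (2:F) = 0 := CharTwo.two_eq_zero
  have hR : AX.Rt σ u r r := by
    refine ⟨hu, ?_, ?_⟩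
    · rw [map_mul]; linear_combination (r*σ r+1) * hr
    · have : r + r = 0 := by linear_combination r * h2'
      rw [this]; simp
  have hu0 : u ≠ 0 := left_ne_zero_of_mul_eq_one hu
  have hr0 : r ≠ 0 := left_ne_zero_of_mul_eq_one hr
  have eu : σ u = 1/u := by field_simp; linear_combination hu
  have er : σ r = 1/r := by field_simp; linear_combination hr
  obtain ⟨t1, ht1⟩ := hsq (u*r)
  have ht1U : t1 * σ t1 = 1 := by
    have : (t1 * σ t1 + 1)^2 = 0 := by
      have e : (σ t1)^2 = σ u * σ r := by rw [← map_pow, ht1, map_mul]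
      have : (t1 * σ t1)^2 = 1 := by
        rw [mul_pow, ht1, e]; linear_combination (r * σ r) * hu + hr
      linear_combination this + (t1 * σ t1 + 1) * h2'
    have := pow_eq_zero_iff (two_ne_zero) |>.1 this
    linear_combination this - h2'
  have et1 : σ t1 = 1/t1 := by
    have : t1 ≠ 0 := left_ne_zero_of_mul_eq_one ht1U
    field_simp; linear_combination ht1U
  have ht10 : t1 ≠ 0 := left_ne_zero_of_mul_eq_one ht1U
  have ht1r : t1 + r ≠ 0 := by
    intro e
    have e : t1 = r := by linear_combination e - r * h2'
    rw [e] at ht1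
    apply hur
    apply mul_right_cancel₀ hr0
    linear_combination - ht1
  obtain ⟨η, hη0, hη⟩ := h90 (r^2) (by rw [map_pow]; linear_combination (r*σ r+1) * hr)
  set X0 := 1/(t1+r) with hX0
  have hsX0 : σ X0 = r + r^2 * X0 := by
    rw [hX0, map_div₀, map_add, et1, er, map_one]
    have : 1/t1+1/r = (t1+r)/(t1*r) := by field_simp; ring
    rw [this]
    field_simp
    linear_combination - r * h2'
  -- value at each point
  have val : ∀ x ∈ K, tr (r*(r+u)/u^2 + r^2*(r+u)^2/u^2*((η*x+X0)^2 + u*(η*x+X0)^3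
        + r*(r+u)*(η*x+X0)^4)) + (u/r + r/u + (r+u)^2/u*((η*x+X0) + r*(η*x+X0)^2)) =
        1 + if x = 0 then 1 else 0 := by
    intro x hx
    rw [hK] at hx
    set X := η*x+X0 with hX
    have hsX : σ X = r + r^2 * X := by
      rw [hX, map_add, map_mul, hx, hη, hsX0]; ring
    have hX00 : X ≠ 0 := by
      intro e; rw [e] at hsX; simp at hsX; exact hr0 hsX.symm
    have hX1 : 1 + r * X ≠ 0 := by
      intro e
      have : σ X = 0 := by rw [hsX]; linear_combination r * e
      rw [map_eq_zero] at this
      exact hX00 this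
    set t := r + 1/X with htd
    have htt : t * σ t = 1 := by
      rw [htd, map_add, map_div₀, hsX, er, map_one]
      have : r + r^2 * X = r * (1 + r * X) := by ring
      rw [this]
      field_simp
      linear_combination (1 + r * X) * h2'
    have htr : t + r = 1/X := by rw [htd]; linear_combination r * h2'
    have htr0 : t + r ≠ 0 := by rw [htr]; exact one_div_ne_zero hX00
    have ht0 : t ≠ 0 := left_ne_zero_of_mul_eq_one htt
    have hXt : X = 1/(t+r) := by rw [htr]; field_simp
    obtain ⟨g1, g2⟩ := AX.G1 h hR (by rw [hk]; linear_combination (a*r - r*r) * h2') t htt htr0 htr0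
    have eY : t*(t+u)*((t^2+u*r)*(t^2+u*r))/(u^2*((t+r)*(t+r))^2) = 
      (((t+r)/u)^2 + (t+r)/u) + (r*(r+u)/u^2 + r^2*(r+u)^2/u^2*(X^2 + u*X^3
        + r*(r+u)*X^4)) := by
      rw [hXt]; field_simp; grind
    have eS : ((t^2+u*r)*(t^2+u*r))/(u*t*((t+r)*(t+r))) = t/u + u/t + (r+u)^2/u*(X+r*X^2) := by
      rw [hXt]; field_simp; grind
    have eg : σ ((t+r)/u) = u/t + u/r := by
      have et : σ t = 1/t := by field_simp; linear_combination htt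
      rw [map_div₀, map_add, et, er, eu]; field_simp
    rw [eY, eS, map_add, h.tr1, eg] at g1 g2
    have hiff : (t^2+u*r)*(t^2+u*r) = 0 ↔ x = 0 := by
      have : (t^2+u*r)*(t^2+u*r) = ((t+t1)^2)^2 := by rw [← ht1]; grind
      rw [this]
      simp only [ne_eq, OfNat.ofNat_ne_zero, not_false_eq_true, pow_eq_zero_iff]
      have : t + t1 = 0 ↔ X = X0 := by
        rw [hX0, hXt, div_eq_div_iff htr0 ht1r]
        constructor
        · intro e; grind
        · intro e; grind
      rw [this, hX]
      simp [hη0]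
    split_ifs with hx0
    · have := g2 (hiff.2 hx0)
      linear_combination this - (t/u+u/t) * h2' - h2'
    · have := g1 (fun e => hx0 (hiff.1 e))
      linear_combination this - (t/u+u/t) * h2'
  have tot := Finset.sum_congr rfl val
  have s0 : ∑ x ∈ K, (1:F) = 0 := by simpa using hsum η X0 0 (by norm_num)
  have s1 := hsum η X0 1 (by norm_num)
  have s2 := hsum η X0 2 (by norm_num)
  have s3 := hsum η X0 3 (by norm_num)
  have s4 := hsum η X0 4 (by norm_num)
  have sc : ∀ c : F, ∑ x ∈ K, c = 0 := fun c => by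
    have : ∑ x ∈ K, c = c * ∑ x ∈ K, (1:F) := by rw [Finset.mul_sum]; simp
    rw [this, s0, mul_zero]
  simp only [pow_one] at s1
  rw [Finset.sum_add_distrib, ← map_sum] at tot
  simp only [Finset.sum_add_distrib, ← Finset.mul_sum, s1, s2, s3, s4, sc] at tot
  have h0 : (0:F) ∈ K := by rw [hK, map_zero]
  simp [h0] at tot

/-- the case of two poles on the unit circle -/
lemma AX.split {F : Type*} [Field F] [CharP F 2] [DecidableEq F] {σ : F →+* F} {tr : F →+ F}
    {a u r r' k : F}
    (h : AX.Ctx σ tr a (u*a) (u*k)) (hu : u * σ u = 1) (hr : r * σ r = 1) (hr' : r' * σ r' = 1)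
    (hk : a * (r + r') = k + r * r') (hd : r + r' ≠ 0)
    (hur : u ≠ r) (hur' : u ≠ r') (h3 : r^2 ≠ u * r') (h4 : r'^2 ≠ u * r)
    (hmom : ∀ w2 w1 w0 w3 w4 v1 v0 v3 x1 x2 : F, σ x1 = x1 → σ x2 = x2 → x1 ≠ 0 → x2 ≠ 0 → 
      x1 ≠ x2 → 
      (∀ x, σ x = x → x ≠ 0 → 
        tr (w2*x^2+w1*x+w0+w3*(1/x)+w4*(1/x)^2) + (v1*x+v0+v3*(1/x)) = 
          if x = x1 ∨ x = x2 then 1 else 0) → False)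
    (hsq : ∀ x : F, ∃ y, y^2 = x)
    (h90 : ∀ t : F, t * σ t = 1 → ∃ v, v ≠ 0 ∧ σ v = t * v) : False := by
  have h2' : (2:F) = 0 := CharTwo.two_eq_zero
  have hu0 : u ≠ 0 := left_ne_zero_of_mul_eq_one hu
  have hr0 : r ≠ 0 := left_ne_zero_of_mul_eq_one hr
  have hr'0 : r' ≠ 0 := left_ne_zero_of_mul_eq_one hr'
  have eu : σ u = 1/u := by field_simp; linear_combination hu
  have er : σ r = 1/r := by field_simp; linear_combination hr
  have er' : σ r' = 1/r' := by field_simp; linear_combination hr'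
  have hR : AX.Rt σ u r r' := by
    refine ⟨hu, ?_, ?_⟩
    · rw [map_mul, er, er']; field_simp
    · rw [map_add, er, er']; field_simp; ring
  have sqU : ∀ t v : F, v * σ v = 1 → t^2 = u*v → t * σ t = 1 := by
    intro t v hv ht
    have : (t * σ t + 1)^2 = 0 := by
      have e : (σ t)^2 = σ u * σ v := by rw [← map_pow, ht, map_mul]
      have : (t * σ t)^2 = 1 := by
        rw [mul_pow, ht, e]; linear_combination (v * σ v) * hu + hv
      linear_combination this + (t * σ t + 1) * h2'
    have := pow_eq_zero_iff (two_ne_zero) |>.1 this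
    linear_combination this - h2'
  obtain ⟨t1, ht1⟩ := hsq (u*r)
  obtain ⟨t2, ht2⟩ := hsq (u*r')
  have ht1U := sqU t1 r hr ht1
  have ht2U := sqU t2 r' hr' ht2
  have addne : ∀ x y : F, x ≠ y → x + y ≠ 0 := by
    intro x y hxy e; apply hxy; linear_combination e - y * h2'
  have ht1r : t1 + r ≠ 0 := addne _ _ (by
    intro e; rw [e] at ht1; apply hur; apply mul_right_cancel₀ hr0; linear_combination - ht1)
  have ht1r' : t1 + r' ≠ 0 := addne _ _ (by intro e; rw [e] at ht1; exact h4 ht1)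
  have ht2r : t2 + r ≠ 0 := addne _ _ (by intro e; rw [e] at ht2; exact h3 ht2)
  have ht2r' : t2 + r' ≠ 0 := addne _ _ (by
    intro e; rw [e] at ht2; apply hur'; apply mul_right_cancel₀ hr'0; linear_combination - ht2)
  obtain ⟨κ, hκ0, hκ⟩ := h90 (r/r') (by rw [map_div₀, er, er']; field_simp)
  -- coordinates
  have xof : ∀ t, t * σ t = 1 → t + r ≠ 0 → t + r' ≠ 0 → 
      σ (κ*(t+r)/(t+r')) = κ*(t+r)/(t+r') := by
    intro t ht h1 h2
    have ht0 : t ≠ 0 := left_ne_zero_of_mul_eq_one ht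
    have et : σ t = 1/t := by field_simp; linear_combination ht
    rw [map_div₀, map_mul, map_add, map_add, hκ, et, er, er']
    have e1 : 1/t+1/r = (t+r)/(t*r) := by field_simp; ring
    have e2 : 1/t+1/r' = (t+r')/(t*r') := by field_simp; ring
    rw [e1, e2]; field_simp
  have inj : t1 ≠ t2 := by
    intro e
    rw [e, ht2] at ht1
    have := mul_left_cancel₀ hu0 ht1
    apply hd; rw [this]; linear_combination r * h2'
  set d := 1/(r+r') with hdd
  apply hmom (r'^2*(r'+u)^2*(r'^2+u*r)/(u^2*(r+r')^2) * (d/κ)^2)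
    ((r'+u)*(r'^2+u*r)*r'/(u*(r+r')^2) * (d/κ))
    (r^2*(r+u)^2*(r^2+u*r')/(u^2*(r+r')^2) * d^2 + (r+u)*(r^2+u*r')*r/(u*(r+r')^2) * d
      + r'^2*(r'+u)^2*(r'^2+u*r)/(u^2*(r+r')^2) * d^2 + (r'+u)*(r'^2+u*r)*r'/(u*(r+r')^2) * d)
    ((r+u)*(r^2+u*r')*r/(u*(r+r')^2) * (d*κ))
    (r^2*(r+u)^2*(r^2+u*r')/(u^2*(r+r')^2) * (d*κ)^2)
    ((r'+u)*(r'^2+u*r)/(u*(r+r')) * (d/κ))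
    ((r+u)*(r^2+u*r')/(u*(r+r')) * d + (r'+u)*(r'^2+u*r)/(u*(r+r')) * d + σ ((r+r')/u) + 1)
    ((r+u)*(r^2+u*r')/(u*(r+r')) * (d*κ))
    (κ*(t1+r)/(t1+r')) (κ*(t2+r)/(t2+r')) (xof t1 ht1U ht1r ht1r') (xof t2 ht2U ht2r ht2r')
    (div_ne_zero (mul_ne_zero hκ0 ht1r) ht1r') (div_ne_zero (mul_ne_zero hκ0 ht2r) ht2r')
  · intro e
    rw [div_eq_div_iff ht1r' ht2r'] at e
    have : κ * ((t1+t2)*(r+r')) = 0 := by grind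
    rcases mul_eq_zero.1 this with e | e
    · exact hκ0 e
    · rcases mul_eq_zero.1 e with e | e
      · exact addne _ _ inj e
      · exact hd e
  intro x hx hx0
  have hκx : κ + x ≠ 0 := by
    intro e
    have e : κ = x := by linear_combination e - x * h2'
    rw [e, hx] at hκ
    have : r / r' = 1 := by
      apply mul_right_cancel₀ hx0; rw [← hκ, one_mul]
    rw [div_eq_one_iff_eq hr'0] at this
    apply hd; rw [this]; linear_combination r' * h2'
  set t := (κ*r+x*r')/(κ+x) with ht
  have e1 : t + r = x*(r+r')/(κ+x) := by
    rw [ht, eq_div_iff hκx, add_mul, div_mul_cancel₀ _ hκx]; linear_combination κ * r * h2'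
  have e2 : t + r' = κ*(r+r')/(κ+x) := by
    rw [ht, eq_div_iff hκx, add_mul, div_mul_cancel₀ _ hκx]; linear_combination x * r' * h2'
  have h1 : t + r ≠ 0 := by rw [e1]; exact div_ne_zero (mul_ne_zero hx0 hd) hκx
  have h2 : t + r' ≠ 0 := by rw [e2]; exact div_ne_zero (mul_ne_zero hκ0 hd) hκx
  have htx : x = κ*(t+r)/(t+r') := by rw [e1, e2]; field_simp
  have hσd : σ (κ + x) = (κ*r+x*r')/r' := by rw [map_add, hκ, hx]; field_simp
  have hnum : κ*r+x*r' ≠ 0 := by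
    intro e; rw [e, zero_div, map_eq_zero] at hσd; exact hκx hσd
  have htU : t * σ t = 1 := by
    rw [ht, map_div₀, hσd, map_add, map_mul, map_mul, hκ, hx, er, er']
    field_simp
  have ht0 : t ≠ 0 := left_ne_zero_of_mul_eq_one htU
  have et : σ t = 1/t := by field_simp; linear_combination htU
  obtain ⟨g1, g2⟩ := AX.G1 h hR hk t htU h1 h2
  rw [AX.pfY u r r' t hu0 h1 h2 hd, AX.pfS u r r' t hu0 ht0 h1 h2 hd, add_assoc, map_add, h.tr1,
    map_add, map_div₀ σ t u, et, eu] at g1 g2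
  have X1 : 1/(t+r) = d + d*κ*(1/x) := by rw [e1, hdd]; field_simp; ring
  have X2 : 1/(t+r') = d + d/κ*x := by rw [e2, hdd]; field_simp
  have Z : r^2*(r+u)^2*(r^2+u*r')/(u^2*(r+r')^2) / (t+r)^2 
        + (r+u)*(r^2+u*r')*r/(u*(r+r')^2) / (t+r)
      + (r'^2*(r'+u)^2*(r'^2+u*r)/(u^2*(r+r')^2) / (t+r')^2 
        + (r'+u)*(r'^2+u*r)*r'/(u*(r+r')^2) / (t+r')) =
     r'^2*(r'+u)^2*(r'^2+u*r)/(u^2*(r+r')^2) * (d/κ)^2 * x^2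
    + (r'+u)*(r'^2+u*r)*r'/(u*(r+r')^2) * (d/κ) * x + 
    (r^2*(r+u)^2*(r^2+u*r')/(u^2*(r+r')^2) * d^2 + (r+u)*(r^2+u*r')*r/(u*(r+r')^2) * d
      + r'^2*(r'+u)^2*(r'^2+u*r)/(u^2*(r+r')^2) * d^2 + (r'+u)*(r'^2+u*r)*r'/(u*(r+r')^2) * d)
    + (r+u)*(r^2+u*r')*r/(u*(r+r')^2) * (d*κ) * (1/x)
    + r^2*(r+u)^2*(r^2+u*r')/(u^2*(r+r')^2) * (d*κ)^2 * (1/x)^2 := by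
    generalize r^2*(r+u)^2*(r^2+u*r')/(u^2*(r+r')^2) = A1
    generalize r'^2*(r'+u)^2*(r'^2+u*r)/(u^2*(r+r')^2) = A2
    generalize (r+u)*(r^2+u*r')*r/(u*(r+r')^2) = B1
    generalize (r'+u)*(r'^2+u*r)*r'/(u*(r+r')^2) = B2
    have q1 : A1/(t+r)^2 = A1 * (1/(t+r))^2 := by field_simp
    have q2 : A2/(t+r')^2 = A2 * (1/(t+r'))^2 := by field_simp
    have q3 : B1/(t+r) = B1 * (1/(t+r)) := by field_simp
    have q4 : B2/(t+r') = B2 * (1/(t+r')) := by field_simp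
    rw [q1, q2, q3, q4, X1, X2]
    generalize 1/x = y
    linear_combination (A1 * d * (d*κ*y) + A2 * d * (d/κ*x)) * h2'
  rw [← Z]
  have hut : 1/t/(1/u) = u/t := by field_simp
  have S1 : (r+u)*(r^2+u*r')/(u*(r+r'))/(t+r) = (r+u)*(r^2+u*r')/(u*(r+r'))*(1/(t+r)) := by
    rw [div_eq_mul_one_div]
  have S2 : (r'+u)*(r'^2+u*r)/(u*(r+r'))/(t+r') = (r'+u)*(r'^2+u*r)/(u*(r+r'))*(1/(t+r')) := by
    rw [div_eq_mul_one_div]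
  rw [hut, S1, S2, X1, X2] at g1 g2
  have hiff : (t^2+u*r)*(t^2+u*r') = 0 ↔ x = κ*(t1+r)/(t1+r') ∨ x = κ*(t2+r)/(t2+r') := by
    have : (t^2+u*r)*(t^2+u*r') = (t+t1)^2*(t+t2)^2 := by rw [← ht1, ← ht2]; grind
    rw [this, mul_eq_zero]
    simp only [ne_eq, OfNat.ofNat_ne_zero, not_false_eq_true, pow_eq_zero_iff]
    have key : ∀ v, v + r' ≠ 0 → (t + v = 0 ↔ x = κ*(v+r)/(v+r')) := by
      intro v hv
      rw [htx, div_eq_div_iff h2 hv]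
      constructor
      · intro e
        have : t = v := by linear_combination e - v * h2'
        rw [this]
      · intro e
        have : κ * ((t+v)*(r+r')) = 0 := by clear_value t; grind
        simpa [hκ0, hd] using this
    rw [key t1 ht1r', key t2 ht2r']
  generalize (r+u)*(r^2+u*r')/(u*(r+r')) = S at *
  generalize (r'+u)*(r'^2+u*r)/(u*(r+r')) = S' at *
  generalize tr _ = TT at *
  generalize 1/x = y at *
  split_ifs with hx12
  · have := g2 (hiff.2 hx12)
    linear_combination this - (t/u+u/t + (r+r')/u) * h2'
  · have := g1 (fun e => hx12 (hiff.1 e))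
    linear_combination this - (t/u+u/t + (r+r')/u) * h2' + h2'

/-- the case of two conjugate poles outside of the unit circle -/
lemma AX.nonsplit {F : Type*} [Field F] [CharP F 2] {σ : F →+* F} {tr : F →+ F}
    {a u r r' k : F}
    (h : AX.Ctx σ tr a (u*a) (u*k)) (hu : u * σ u = 1) (hr : r' * σ r = 1) (hr' : r * σ r' = 1)
    (hrU : r * σ r ≠ 1)
    (hk : a * (r + r') = k + r * r') (hd : r + r' ≠ 0)
    (hpoly : ∀ l l' k0 : F, (∀ t, t * σ t = 1 → tr (l/(t+r) + l'/(t+r')) = k0) → l = 0)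
    (hsq : ∀ x : F, ∃ y, y^2 = x) : r^2 = u * r' := by
  have h2' : (2:F) = 0 := CharTwo.two_eq_zero
  have hu0 : u ≠ 0 := left_ne_zero_of_mul_eq_one hu
  have hr0 : r ≠ 0 := left_ne_zero_of_mul_eq_one hr'
  have hr'0 : r' ≠ 0 := left_ne_zero_of_mul_eq_one hr
  have eu : σ u = 1/u := by field_simp; linear_combination hu
  have er : σ r = 1/r' := by field_simp; linear_combination hr
  have er' : σ r' = 1/r := by field_simp; linear_combination hr'
  have hR : AX.Rt σ u r r' := by
    refine ⟨hu, ?_, ?_⟩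
    · rw [map_mul, er, er']; field_simp
    · rw [map_add, er, er']; field_simp
  have hr'U : r' * σ r' ≠ 1 := by
    intro e
    rw [er'] at e
    field_simp at e
    apply hd; rw [e]; linear_combination r * h2'
  obtain ⟨α, hα⟩ := hsq (r^2*(r+u)^2*(r^2+u*r')/(u^2*(r+r')^2))
  obtain ⟨α', hα'⟩ := hsq (r'^2*(r'+u)^2*(r'^2+u*r)/(u^2*(r+r')^2))
  have hd' : r' + r ≠ 0 := by rwa [add_comm]
  have sq0 : ∀ x : F, x^2 = 0 → x = 0 := fun x hx => pow_eq_zero_iff (two_ne_zero) |>.1 hx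
  have sδ : 1/r'+1/r = (r+r')/(r*r') := by field_simp
  have sσα' : (σ α')^2 = (r+u)^2*(r^2+u*r')*r'/(r^4*u*(r+r')^2) := by
    rw [← map_pow, hα']
    simp only [map_div₀, map_mul, map_add, map_pow, er, er', eu]
    rw [sδ]; field_simp; ring
  have sσα : (σ α)^2 = (r'+u)^2*(r'^2+u*r)*r/(r'^4*u*(r+r')^2) := by
    rw [← map_pow, hα]
    simp only [map_div₀, map_mul, map_add, map_pow, er, er', eu]
    rw [sδ]; field_simp; ring
  have R1 : (r+u)*(r^2+u*r')/(u*(r+r')) + α + σ α' * r^2 = 0 := by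
    apply sq0
    have : ((r+u)*(r^2+u*r')/(u*(r+r')) + α + σ α' * r^2)^2 = 
      ((r+u)*(r^2+u*r')/(u*(r+r')))^2 + α^2 + (σ α')^2 * r^4 := by grind
    rw [this, hα, sσα']
    field_simp
    grind
  have R2 : (r'+u)*(r'^2+u*r)/(u*(r+r')) + α' + σ α * r'^2 = 0 := by
    apply sq0
    have : ((r'+u)*(r'^2+u*r)/(u*(r+r')) + α' + σ α * r'^2)^2 = 
      ((r'+u)*(r'^2+u*r)/(u*(r+r')))^2 + α'^2 + (σ α)^2 * r'^4 := by grind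
    rw [this, hα', sσα]
    field_simp
    grind
  have addne : ∀ x y : F, x ≠ y → x + y ≠ 0 := by
    intro x y hxy e; apply hxy; linear_combination e - y * h2'
  have l0 := hpoly (α + (r+u)*(r^2+u*r')*r/(u*(r+r')^2)) (α' + (r'+u)*(r'^2+u*r)*r'/(u*(r+r')^2))
    (1 + σ ((r+r')/u) + σ α * r' + σ α' * r) (by
    intro t ht
    have ht0 : t ≠ 0 := left_ne_zero_of_mul_eq_one ht
    have et : σ t = 1/t := by field_simp; linear_combination ht
    have h1 : t + r ≠ 0 := addne _ _ (by intro e; rw [e] at ht; exact hrU ht)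
    have h2 : t + r' ≠ 0 := addne _ _ (by intro e; rw [e] at ht; exact hr'U ht)
    have sqn : ∀ v, v * σ v ≠ 1 → t^2 + u * v ≠ 0 := by
      intro v hv
      apply addne
      intro e
      apply hv
      have e' : (σ t)^2 = σ u * σ v := by rw [← map_pow, e, map_mul]
      have : (u * σ u) * (v * σ v) = (t * σ t)^2 := by rw [mul_pow, e, e']; ring
      rw [hu, ht] at this
      linear_combination this
    have g := (AX.G1 h hR hk t ht h1 h2).1 (mul_ne_zero (sqn r hrU) (sqn r' hr'U))
    rw [AX.pfY u r r' t hu0 h1 h2 hd, AX.pfS u r r' t hu0 ht0 h1 h2 hd, ← hα, ← hα'] at g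
    generalize (r+u)*(r^2+u*r')/(u*(r+r')) = S at *
    generalize (r'+u)*(r'^2+u*r)/(u*(r+r')) = S' at *
    generalize (r+u)*(r^2+u*r')*r/(u*(r+r')^2) = β at *
    generalize (r'+u)*(r'^2+u*r)*r'/(u*(r+r')^2) = β' at *
    have sX : σ (1/(t+r)) = r' + r'^2 * (1/(t+r')) := by
      rw [map_div₀, map_add, et, er, map_one]
      have e2 : 1/t+1/r' = (t+r')/(t*r') := by field_simp; ring
      rw [e2]; field_simp; linear_combination - r' * h2'
    have sX' : σ (1/(t+r')) = r + r^2 * (1/(t+r)) := by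
      rw [map_div₀, map_add, et, er', map_one]
      have e2 : 1/t+1/r = (t+r)/(t*r) := by field_simp; ring
      rw [e2]; field_simp; linear_combination - r * h2'
    have E : (t/u+(r+r')/u)^2 + (t/u+(r+r')/u) + (α^2/(t+r)^2 + β/(t+r)) 
      + (α'^2/(t+r')^2 + β'/(t+r')) = ((t/u+(r+r')/u)^2 + (t/u+(r+r')/u))
       + (((α * (1/(t+r)))^2 + α * (1/(t+r))) + ((α' * (1/(t+r')))^2 + α' * (1/(t+r'))))
       + ((α+β)/(t+r) + (α'+β')/(t+r')) := by
      field_simp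
      grind
    rw [E, map_add, map_add, h.tr1, map_add tr, h.tr1, h.tr1, map_mul, map_mul, sX, sX', map_add σ,
      map_div₀ σ t u, et, eu] at g
    have hut : 1/t/(1/u) = u/t := by field_simp
    have S1 : S/(t+r) = S*(1/(t+r)) := by rw [div_eq_mul_one_div]
    have S2 : S'/(t+r') = S'*(1/(t+r')) := by rw [div_eq_mul_one_div]
    rw [hut, S1, S2] at g
    generalize tr _ = TT at *
    generalize 1/(t+r) = X at *
    generalize 1/(t+r') = X' at *
    linear_combination g - X * R1 - X' * R2 - (t/u+u/t + (r+r')/u + σ ((r+r')/u)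
      + σ α * r' + σ α' * r) * h2')
  by_contra hne
  have hne : r^2 + u*r' ≠ 0 := addne _ _ hne
  have e : (r^2*(r+u)^2*(r^2+u*r')/(u^2*(r+r')^2)) = ((r+u)*(r^2+u*r')*r/(u*(r+r')^2))^2 := by
    rw [← hα]
    have : α = (r+u)*(r^2+u*r')*r/(u*(r+r')^2) := by
      linear_combination l0 - (r+u)*(r^2+u*r')*r/(u*(r+r')^2) * h2'
    rw [this]
  have hru : r + u ≠ 0 := addne _ _ (by intro e; rw [e] at hrU; exact hrU hu)
  have hru' : r' + u ≠ 0 := addne _ _ (by intro e; rw [e] at hr'U; exact hr'U hu)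
  have : r' * (r' + u) = 0 := by
    field_simp at e
    grind
  exact mul_ne_zero hr'0 hru' this

def AX.tr (F : Type*) [Field F] [CharP F 2] (m : ℕ) : F →+ F :=
  AddMonoidHom.mk' (fun x => ∑ i ∈ Finset.range m, x ^ (2 ^ i)) (by
    intro a b
    rw [← Finset.sum_add_distrib]
    exact Finset.sum_congr rfl fun i _ => add_pow_char_pow a b 2 i)

lemma AX.tr_apply {F : Type*} [Field F] [CharP F 2] (m : ℕ) (x : F) :
    AX.tr F m x = ∑ i ∈ Finset.range m, x ^ (2 ^ i) := rfl

lemma AX.tr1' {F : Type*} [Field F] [CharP F 2] (m : ℕ) (x : F) :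
    AX.tr F m (x^2+x) = x^(2^m) + x := by
  have h2' : (2:F) = 0 := CharTwo.two_eq_zero
  induction m with
  | zero => simp [AX.tr_apply]; grind
  | succ n ih =>
    rw [AX.tr_apply] at ih ⊢
    rw [Finset.sum_range_succ, ih, add_pow_char_pow, ← pow_mul, pow_succ 2 n, mul_comm 2]
    linear_combination x^(2^n) * h2'

lemma AX.tr2' {F : Type*} [Field F] [CharP F 2] (m : ℕ) (x : F) :
    AX.tr F m (x^2) = (AX.tr F m x)^2 := by
  rw [AX.tr_apply, AX.tr_apply, CharTwo.sum_sq]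
  exact Finset.sum_congr rfl fun i _ => by rw [← pow_mul, ← pow_mul, mul_comm]

lemma AX.hsq' {F : Type*} [Field F] [Fintype F] [CharP F 2] (x : F) : ∃ y : F, y^2 = x := by
  have hi : Function.Injective (frobenius F 2) := frobenius_inj F 2
  obtain ⟨y, hy⟩ := (Finite.injective_iff_surjective.1 hi) x
  exact ⟨y, hy⟩

lemma AX.as' {F : Type*} [Field F] [Fintype F] [CharP F 2] (n : ℕ) (hn : 1 ≤ n)
    (hcard : Fintype.card F = 2 ^ n) (k : F) (hk : AX.tr F n k = 0) : ∃ y : F, y^2+y = k := by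
  classical
  have h2' : (2:F) = 0 := CharTwo.two_eq_zero
  let L : F →+ F := AddMonoidHom.mk' (fun y => y^2+y) (by intro a b; linear_combination a*b*h2')
  have hL : ∀ y, L y = y^2+y := fun _ => rfl
  have hker : Nat.card L.ker = 2 := by
    have : (L.ker : Set F) = {0, 1} := by
      ext y
      simp only [SetLike.mem_coe, AddMonoidHom.mem_ker, hL, Set.mem_insert_iff,
        Set.mem_singleton_iff]
      constructor
      · intro h
        have : y * (y + 1) = 0 := by linear_combination h
        rcases mul_eq_zero.1 this with h | h
        · exact Or.inl h
        · right; linear_combination h - h2'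
      · rintro (rfl | rfl)
        · simp
        · linear_combination h2'
    rw [← SetLike.coe_sort_coe, this, Nat.card_coe_set_eq, Set.ncard_pair zero_ne_one]
  have hprod : Nat.card L.ker * Nat.card L.range = 2^n := by
    rw [← hcard, ← Nat.card_eq_fintype_card, ← AddSubgroup.index_ker]
    exact AddSubgroup.card_mul_index _
  have hsub : (L.range : Set F) ⊆ {x | AX.tr F n x = 0} := by
    rintro _ ⟨y, rfl⟩
    simp only [Set.mem_ofPred_eq, hL, AX.tr1', ← hcard, FiniteField.pow_card]
    linear_combination y * h2'
  have hle : ({x | AX.tr F n x = 0} : Set F).ncard ≤ 2^(n-1) := by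
    let p : Polynomial F := ∑ i ∈ Finset.range n, Polynomial.X ^ (2^i)
    have hp0 : p ≠ 0 := by
      intro h
      have := congrArg (fun p => Polynomial.coeff p 1) h
      simp only [p, Polynomial.finsetSum_coeff, Polynomial.coeff_X_pow, Polynomial.coeff_zero] at this
      rw [Finset.sum_eq_single 0] at this
      · simp at this
      · intro b _ hb
        rw [if_neg]
        exact (Nat.one_lt_two_pow hb).ne
      · intro h; simp at h; omega
    have hdeg : p.natDegree ≤ 2^(n-1) := by
      apply Polynomial.natDegree_sum_le_of_forall_le
      intro i hi
      rw [Polynomial.natDegree_X_pow]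
      exact Nat.pow_le_pow_right (by norm_num) (by have := Finset.mem_range.1 hi; omega)
    have : ({x | AX.tr F n x = 0} : Set F) ⊆ (p.roots.toFinset : Set F) := by
      intro x hx
      simp only [Finset.mem_coe, Multiset.mem_toFinset, Polynomial.mem_roots hp0, Polynomial.IsRoot.def]
      simp only [p, Polynomial.eval_finsetSum, Polynomial.eval_pow, Polynomial.eval_X]
      exact hx
    calc _ ≤ (p.roots.toFinset : Set F).ncard := Set.ncard_le_ncard this (Set.toFinite _)
      _ = p.roots.toFinset.card := Set.ncard_coe_finset _
      _ ≤ _ := Multiset.toFinset_card_le _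
      _ ≤ _ := Polynomial.card_roots' _
      _ ≤ _ := hdeg
  have heq : (L.range : Set F) = {x | AX.tr F n x = 0} := by
    apply Set.eq_of_subset_of_ncard_le hsub _ (Set.toFinite _)
    refine hle.trans ?_
    rw [← Nat.card_coe_set_eq]
    have h3 : (2:ℕ)^n = 2 * 2^(n-1) := by
      rw [← pow_succ']; congr 1; omega
    rw [hker, h3] at hprod
    have : Nat.card L.range = 2^(n-1) := by omega
    exact this.ge
  have : k ∈ (L.range : Set F) := by rw [heq]; exact hk
  obtain ⟨y, hy⟩ := this
  exact ⟨y, hy⟩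

lemma AX.tr_add {F : Type*} [Field F] [CharP F 2] (m : ℕ) (x : F) :
    AX.tr F (2*m) x = AX.tr F m x + (AX.tr F m x)^(2^m) := by
  rw [AX.tr_apply, AX.tr_apply, two_mul, Finset.sum_range_add, sum_pow_char_pow]
  congr 1
  exact Finset.sum_congr rfl fun i _ => by rw [← pow_mul, pow_add, mul_comm]

lemma AX.sumz {F : Type*} [Field F] (S : Finset F) (g lam : F) (hg : g ≠ 0)
    (hS : ∀ x, x ∈ S ↔ g * x ∈ S) (f : F → F) (hl : lam ≠ 1)
    (hf : ∀ x ∈ S, f (g * x) = lam * f x) : ∑ x ∈ S, f x = 0 := by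
  have h : ∑ x ∈ S, lam * f x = ∑ x ∈ S, f x := by
    refine Finset.sum_equiv (Equiv.mulLeft₀ g hg) (fun i => by simpa using hS i) ?_
    intro i hi
    rw [← hf i hi]; rfl
  rw [← Finset.mul_sum] at h
  have : (lam - 1) * ∑ x ∈ S, f x = 0 := by linear_combination h
  exact (mul_eq_zero.1 this).resolve_left (sub_ne_zero.2 hl)

lemma AX.gen {F : Type*} [Field F] [Fintype F] (m : ℕ) (hm : 4 ≤ m)
    (hcard : Fintype.card F = 2 ^ (2 * m)) :
    (∃ g : F, orderOf g = 2^m - 1) ∧ (∃ g : F, orderOf g = 2^m + 1) := by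
  classical
  obtain ⟨γ, hγ⟩ := IsCyclic.exists_generator (α := Fˣ)
  have ho : orderOf γ = (2^m-1) * (2^m+1) := by
    rw [orderOf_eq_card_of_forall_mem_zpowers hγ, Nat.card_eq_fintype_card, Fintype.card_units, hcard, two_mul,
      pow_add]
    have : 1 ≤ 2^m := Nat.one_le_two_pow
    obtain ⟨c, hc⟩ := Nat.exists_eq_add_of_le this
    rw [hc]; simp
    ring_nf
    omega
  have : 16 ≤ 2^m := by
    calc 16 = 2^4 := by norm_num
      _ ≤ 2^m := Nat.pow_le_pow_right (by norm_num) hm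
  have hp : 0 < 2^m - 1 := by omega
  constructor
  · refine ⟨((γ^(2^m+1) : Fˣ) : F), ?_⟩
    rw [orderOf_units, orderOf_pow_of_dvd (by omega) (ho ▸ Dvd.intro_left _ rfl), ho]
    exact Nat.mul_div_cancel _ (by omega)
  · refine ⟨((γ^(2^m-1) : Fˣ) : F), ?_⟩
    rw [orderOf_units, orderOf_pow_of_dvd (by omega) (ho ▸ Dvd.intro _ rfl), ho]
    exact Nat.mul_div_cancel_left _ (by omega)

lemma AX.hsum' {F : Type*} [Field F] [CharP F 2] (σ : F →+* F) (m : ℕ) (hm : 4 ≤ m)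
    (g : F) (hg : orderOf g = 2^m - 1) (hgs : σ g = g) (K : Finset F)
    (hK : ∀ x, x ∈ K ↔ σ x = x) (η X : F) (j : ℕ) (hj : j ≤ 4) :
    ∑ x ∈ K, (η*x+X)^j = 0 := by
  have h2' : (2:F) = 0 := CharTwo.two_eq_zero
  have h16 : 16 ≤ 2^m := by
    calc 16 = 2^4 := by norm_num
      _ ≤ 2^m := Nat.pow_le_pow_right (by norm_num) hm
  have hg0 : g ≠ 0 := by
    rintro rfl
    simp at hg; omega
  have h0 : ∑ x ∈ K, (1:F) = 0 := by
    refine Finset.sum_involution (fun x _ => x + 1) ?_ ?_ ?_ ?_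
    · intro a _; linear_combination h2'
    · intro a _ _ h; simp at h
    · intro a ha; rw [hK] at ha ⊢; simp [ha]
    · intro a _; linear_combination h2'
  have hp : ∀ i : ℕ, i ≤ 4 → 1 ≤ i → ∑ x ∈ K, x^i = 0 := by
    intro i hi hi1
    refine AX.sumz K g (g^i) hg0 ?_ _ ?_ ?_
    · intro x; rw [hK, hK, map_mul, hgs]; simp [hg0]
    · intro h
      have := Nat.le_of_dvd (by omega) (orderOf_dvd_of_pow_eq_one h)
      omega
    · intro x _; ring
  have e1 := hp 1 (by norm_num) (by norm_num)
  have e2 := hp 2 (by norm_num) (by norm_num)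
  have e3 := hp 3 (by norm_num) (by norm_num)
  have e4 := hp 4 (by norm_num) (by norm_num)
  have key : ∀ c0 c1 c2 c3 c4 : F, ∑ x ∈ K, (c0*1+c1*x^1+c2*x^2+c3*x^3+c4*x^4) = 0 := by
    intro c0 c1 c2 c3 c4
    simp only [Finset.sum_add_distrib, ← Finset.mul_sum, h0, e1, e2, e3, e4]
    simp
  interval_cases j
  · simpa using h0
  · rw [← key X η 0 0 0]; exact Finset.sum_congr rfl fun x _ => by ring
  · rw [← key (X^2) (2*η*X) (η^2) 0 0]; exact Finset.sum_congr rfl fun x _ => by ring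
  · rw [← key (X^3) (3*η*X^2) (3*η^2*X) (η^3) 0]; exact Finset.sum_congr rfl fun x _ => by ring
  · rw [← key (X^4) (4*η*X^3) (6*η^2*X^2) (4*η^3*X) (η^4)]
    exact Finset.sum_congr rfl fun x _ => by ring

lemma AX.gne {F : Type*} [Field F] (m : ℕ) (hm : 4 ≤ m)
    (g : F) (hg : orderOf g = 2^m - 1) (j e : ℕ) (hj : j = 3 ∨ j = 5) (he : e ≤ m) :
    g^j ≠ 1 ∧ g^(2^e) * g^j ≠ 1 ∧ g^j ≠ g^(2^e) := by
  have h16 : 16 ≤ 2^m := by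
    calc 16 = 2^4 := by norm_num
      _ ≤ 2^m := Nat.pow_le_pow_right (by norm_num) hm
  have hgp : g^(2^m) = g := by
    have := pow_orderOf_eq_one g
    rw [hg] at this
    calc g^(2^m) = g^(2^m-1+1) := by congr 1; omega
      _ = g := by rw [pow_succ, this, one_mul]
  have hlt : ∀ i : ℕ, 1 ≤ i → i < 2^m-1 → g^i ≠ 1 := by
    intro i h1 h2 h
    have := Nat.le_of_dvd (by omega) (orderOf_dvd_of_pow_eq_one h)
    omega
  have hinj : ∀ i k : ℕ, i < 2^m-1 → k < 2^m-1 → g^i = g^k → i = k := by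
    intro i k hi hk h
    exact pow_injOn_Iio_orderOf (by simpa [hg] using hi) (by simpa [hg] using hk) h
  rcases Nat.lt_or_ge e m with h | h
  · have hQ : 2 * 2^e ≤ 2^m := by
      rw [← pow_succ']; exact Nat.pow_le_pow_right (by norm_num) h
    have hQ1 : 1 ≤ 2^e := Nat.one_le_two_pow
    refine ⟨hlt j (by omega) (by omega), ?_, ?_⟩
    · rw [← pow_add]; exact hlt _ (by omega) (by omega)
    · intro h
      have := hinj _ _ (by omega) (by omega) h
      rcases e with _ | _ | _ | e
      · simp at this; omega
      · simp at this; omega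
      · simp at this; omega
      · simp only [pow_succ] at this; omega
  · obtain rfl : e = m := by omega
    rw [hgp]
    refine ⟨hlt j (by omega) (by omega), ?_, ?_⟩
    · rw [← pow_succ']; exact hlt _ (by omega) (by omega)
    · intro h
      have := hinj j 1 (by omega) (by omega) (by simpa using h)
      omega

lemma AX.hmom' {F : Type*} [Field F] [Fintype F] [CharP F 2] (σ : F →+* F) (m : ℕ) (hm : 4 ≤ m)
    (g : F) (hg : orderOf g = 2^m - 1) (hgs : σ g = g)
    (w2 w1 w0 w3 w4 v1 v0 v3 x1 x2 : F) (hx1 : σ x1 = x1) (hx2 : σ x2 = x2) (h01 : x1 ≠ 0)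
    (h02 : x2 ≠ 0) (h12 : x1 ≠ x2) (dec : ∀ x : F, Decidable (x = x1 ∨ x = x2))
    (H : ∀ x, σ x = x → x ≠ 0 → AX.tr F m (w2*x^2+w1*x+w0+w3*(1/x)+w4*(1/x)^2)+(v1*x+v0+v3*(1/x))
      = if x = x1 ∨ x = x2 then 1 else 0) : False := by
  classical
  have h2' : (2:F) = 0 := CharTwo.two_eq_zero
  have h16 : 16 ≤ 2^m := by
    calc 16 = 2^4 := by norm_num
      _ ≤ 2^m := Nat.pow_le_pow_right (by norm_num) hm
  have hg0 : g ≠ 0 := by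
    rintro rfl
    simp at hg; omega
  let S : Finset F := Finset.univ.filter (fun x => σ x = x ∧ x ≠ 0)
  have hS : ∀ x, x ∈ S ↔ σ x = x ∧ x ≠ 0 := by simp [S]
  have hSg : ∀ x, x ∈ S ↔ g * x ∈ S := by
    intro x; rw [hS, hS, map_mul, hgs]; simp [hg0]
  have main : ∀ j : ℕ, (j = 3 ∨ j = 5) → x1^j + x2^j = 0 := by
    intro j hj
    have G := fun e he => AX.gne m hm g hg j e hj he
    have P : ∀ (w : F) (e : ℕ), e ≤ m → ∑ x ∈ S, w * x^(2^e) * x^j = 0 := by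
      intro w e he
      refine AX.sumz S g _ hg0 hSg _ (G e he).2.1 ?_
      intro x _; ring
    have N : ∀ (w : F) (e : ℕ), e ≤ m → ∑ x ∈ S, w * (1/x)^(2^e) * x^j = 0 := by
      intro w e he
      refine AX.sumz S g (g^j / g^(2^e)) hg0 hSg _ ?_ ?_
      · intro h
        rw [div_eq_one_iff_eq (pow_ne_zero _ hg0)] at h
        exact (G e he).2.2 h
      · intro x hx
        have := ((hS x).1 hx).2
        simp only [div_pow, mul_pow, one_pow]
        field_simp
    have Z : ∀ (w : F), ∑ x ∈ S, w * x^j = 0 := by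
      intro w
      refine AX.sumz S g (g^j) hg0 hSg _ (G 0 (by omega)).1 ?_
      intro x _; ring
    have T : ∀ h : F → F, (∀ i < m, ∑ x ∈ S, (h x)^(2^i) * x^j = 0) →
        ∑ x ∈ S, AX.tr F m (h x) * x^j = 0 := by
      intro h hh
      simp only [AX.tr_apply, Finset.sum_mul]
      rw [Finset.sum_comm]
      exact Finset.sum_eq_zero fun i hi => hh i (Finset.mem_range.1 hi)
    have t2 : ∑ x ∈ S, AX.tr F m (w2*x^2) * x^j = 0 := T _ fun i hi => by
      rw [← P (w2^(2^i)) (i+1) hi]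
      exact Finset.sum_congr rfl fun x _ => by rw [mul_pow, ← pow_mul, pow_succ']
    have t1 : ∑ x ∈ S, AX.tr F m (w1*x) * x^j = 0 := T _ fun i hi => by
      rw [← P (w1^(2^i)) i hi.le]
      exact Finset.sum_congr rfl fun x _ => by rw [mul_pow]
    have t0 : ∑ x ∈ S, AX.tr F m w0 * x^j = 0 := Z _
    have t3 : ∑ x ∈ S, AX.tr F m (w3*(1/x)) * x^j = 0 := T _ fun i hi => by
      rw [← N (w3^(2^i)) i hi.le]
      exact Finset.sum_congr rfl fun x _ => by rw [mul_pow]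
    have t4 : ∑ x ∈ S, AX.tr F m (w4*(1/x)^2) * x^j = 0 := T _ fun i hi => by
      rw [← N (w4^(2^i)) (i+1) hi]
      exact Finset.sum_congr rfl fun x _ => by rw [mul_pow, ← pow_mul, pow_succ']
    have s1 : ∑ x ∈ S, v1*x * x^j = 0 := by simpa using P v1 0 (by omega)
    have s0 : ∑ x ∈ S, v0 * x^j = 0 := Z _
    have s3 : ∑ x ∈ S, v3*(1/x) * x^j = 0 := by
      have := N v3 0 (by omega)
      simp only [pow_zero, pow_one] at this
      exact this
    have e1 : ∑ x ∈ S, (AX.tr F m (w2*x^2+w1*x+w0+w3*(1/x)+w4*(1/x)^2)+(v1*x+v0+v3*(1/x))) * x^j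
        = 0 := by
      simp only [map_add, add_mul, Finset.sum_add_distrib, t2, t1, t0, t3, t4, s1, s0, s3]
      simp
    have e2 : ∑ x ∈ S, (AX.tr F m (w2*x^2+w1*x+w0+w3*(1/x)+w4*(1/x)^2)+(v1*x+v0+v3*(1/x))) * x^j
        = ∑ x ∈ ({x1, x2} : Finset F), x^j := by
      have hsub : ({x1, x2} : Finset F) ⊆ S := by
        intro x hx
        simp only [Finset.mem_insert, Finset.mem_singleton] at hx
        rcases hx with rfl | rfl
        · exact (hS _).2 ⟨hx1, h01⟩
        · exact (hS _).2 ⟨hx2, h02⟩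
      rw [← Finset.sum_subset hsub (f := fun x =>
        (AX.tr F m (w2*x^2+w1*x+w0+w3*(1/x)+w4*(1/x)^2)+(v1*x+v0+v3*(1/x))) * x^j)]
      · refine Finset.sum_congr rfl fun x hx => ?_
        have hx' := (hS x).1 (hsub hx)
        rw [H x hx'.1 hx'.2, if_pos (by simpa using hx), one_mul]
      · intro x hx hn
        have hx' := (hS x).1 hx
        rw [H x hx'.1 hx'.2, if_neg (by simpa using hn), zero_mul]
    rw [e1, Finset.sum_pair h12] at e2
    exact e2.symm
  have a3 := main 3 (Or.inl rfl)
  have a5 := main 5 (Or.inr rfl)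
  have : x1^5 * (x1 + x2) = 0 := by grind
  rcases mul_eq_zero.1 this with h | h
  · exact h01 (pow_eq_zero_iff (by norm_num) |>.1 h)
  · apply h12; linear_combination h - x2 * h2'

lemma AX.hpoly' {F : Type*} [Field F] [Fintype F] [CharP F 2] (m : ℕ) (hm : 4 ≤ m)
    (g : F) (hg : orderOf g = 2^m + 1) (r r' : F) (hr : r * r^(2^m) ≠ 1) (hr' : r' * r'^(2^m) ≠ 1)
    (hd : r + r' ≠ 0) (l l' k0 : F)
    (H : ∀ t : F, t * t^(2^m) = 1 → AX.tr F m (l/(t+r)+l'/(t+r')) = k0) : l = 0 := by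
  classical
  have h2' : (2:F) = 0 := CharTwo.two_eq_zero
  have hprim : IsPrimitiveRoot g (2^m+1) := hg ▸ IsPrimitiveRoot.orderOf g
  obtain ⟨n, rfl⟩ : ∃ n, m = n + 1 := ⟨m-1, by omega⟩
  set Q := 2^n with hQ
  have hQm : 2^(n+1) = 2*Q := by rw [pow_succ']
  have hile : ∀ i ∈ Finset.range (n+1), 2^i ≤ Q := fun i hi =>
    Nat.pow_le_pow_right (by norm_num) (by have := Finset.mem_range.1 hi; omega)
  have h1Q : 1 ≤ Q := Nat.one_le_two_pow
  let A : Polynomial F := Polynomial.X + Polynomial.C r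
  let B : Polynomial F := Polynomial.X + Polynomial.C r'
  let p : Polynomial F := Polynomial.C k0 * (A^Q * B^Q) +
    ∑ i ∈ Finset.range (n+1), (Polynomial.C (l^(2^i)) * (A^(Q-2^i) * B^Q) +
      Polynomial.C (l'^(2^i)) * (A^Q * B^(Q-2^i)))
  have hdAB : ∀ (c : F) (x y : ℕ), x ≤ Q → y ≤ Q →
      (Polynomial.C c * (A^x * B^y)).natDegree ≤ 2*Q := by
    intro c x y hx hy
    refine (Polynomial.natDegree_C_mul_le _ _).trans ?_
    refine Polynomial.natDegree_mul_le.trans ?_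
    rw [Polynomial.natDegree_pow, Polynomial.natDegree_pow, Polynomial.natDegree_X_add_C,
      Polynomial.natDegree_X_add_C]
    omega
  have hdeg : p.natDegree ≤ 2*Q := by
    refine Polynomial.natDegree_add_le_of_degree_le (hdAB _ _ _ le_rfl le_rfl) ?_
    refine Polynomial.natDegree_sum_le_of_forall_le _ _ fun i hi => ?_
    exact Polynomial.natDegree_add_le_of_degree_le (hdAB _ _ _ (Nat.sub_le _ _) le_rfl)
      (hdAB _ _ _ le_rfl (Nat.sub_le _ _))
  have hp : p = 0 := by
    refine Polynomial.eq_zero_of_natDegree_lt_card_of_eval_eq_zero' p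
      (Polynomial.nthRootsFinset (2^(n+1)+1) (1:F)) ?_ ?_
    · intro t ht
      rw [Polynomial.mem_nthRootsFinset (by omega)] at ht
      have ht' : t * t^(2^(n+1)) = 1 := by rw [← pow_succ']; exact ht
      have ha : t + r ≠ 0 := by
        intro h
        have : t = r := by linear_combination h - r * h2'
        rw [this] at ht'; exact hr ht'
      have hb : t + r' ≠ 0 := by
        intro h
        have : t = r' := by linear_combination h - r' * h2'
        rw [this] at ht'; exact hr' ht'
      have hH := H t ht'
      rw [AX.tr_apply] at hH
      simp only [p, A, B, Polynomial.eval_add, Polynomial.eval_mul, Polynomial.eval_C,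
        Polynomial.eval_pow, Polynomial.eval_X, Polynomial.eval_finsetSum]
      have : ∑ i ∈ Finset.range (n+1), (l^(2^i) * ((t+r)^(Q-2^i)*(t+r')^Q) +
          l'^(2^i) * ((t+r)^Q*(t+r')^(Q-2^i))) = k0 * ((t+r)^Q*(t+r')^Q) := by
        rw [← hH, Finset.sum_mul]
        refine Finset.sum_congr rfl fun i hi => ?_
        rw [add_pow_char_pow (l/(t+r)), div_pow, div_pow]
        have ea : (t+r)^Q = (t+r)^(Q-2^i) * (t+r)^(2^i) := by
          rw [← pow_add, Nat.sub_add_cancel (hile i hi)]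
        have eb : (t+r')^Q = (t+r')^(Q-2^i) * (t+r')^(2^i) := by
          rw [← pow_add, Nat.sub_add_cancel (hile i hi)]
        rw [ea, eb]
        have ha' := pow_ne_zero (2^i) ha
        have hb' := pow_ne_zero (2^i) hb
        generalize (t+r)^(2^i) = α at *
        generalize (t+r')^(2^i) = β at *
        field_simp
      rw [this]
      linear_combination k0 * ((t+r)^Q*(t+r')^Q) * h2'
    · rw [hprim.card_nthRootsFinset]; omega
  have he := congrArg (Polynomial.eval r) hp
  simp only [p, A, B, Polynomial.eval_add, Polynomial.eval_mul, Polynomial.eval_C,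
        Polynomial.eval_pow, Polynomial.eval_X, Polynomial.eval_finsetSum, Polynomial.eval_zero] at he
  have hrr : r + r = 0 := by linear_combination r * h2'
  rw [hrr, zero_pow (by omega)] at he
  rw [Finset.sum_eq_single n] at he
  · simp [← hQ] at he
    rcases he with h | h
    · exact h.1
    · exact absurd h.1 hd
  · intro i hi hne
    have : 2^i < Q := Nat.pow_lt_pow_right (by norm_num)
      (by have := Finset.mem_range.1 hi; omega)
    rw [zero_pow (by omega)]; simp
  · intro h; simp at h

lemma AX.h90' {F : Type*} [Field F] [CharP F 2] (σ : F →+* F) (hi : ∀ x, σ (σ x) = x) (t : F)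
    (ht : t * σ t = 1) : ∃ v, v ≠ 0 ∧ σ v = t * v := by
  have h2' : (2:F) = 0 := CharTwo.two_eq_zero
  by_cases h : t = 1
  · exact ⟨1, one_ne_zero, by simp [h]⟩
  · refine ⟨1 + σ t, ?_, ?_⟩
    · intro h0
      apply h
      have : σ t = 1 := by linear_combination h0 - h2'
      rw [← hi t, this, map_one]
    · rw [map_add, hi, map_one]; linear_combination -ht

lemma AX.main {F : Type*} [Field F] [CharP F 2] [DecidableEq F] {σ : F →+* F} {tr : F →+ F}
    {a u k : F} (h : AX.Ctx σ tr a (u*a) (u*k)) (hu : u * σ u = 1) (ha : σ a = a) (ha0 : a ≠ 0)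
    (K : Finset F) (hK : ∀ x, x ∈ K ↔ σ x = x)
    (hsum : ∀ η X, ∀ j ≤ 4, ∑ x ∈ K, (η*x+X)^j = 0)
    (hmom : ∀ w2 w1 w0 w3 w4 v1 v0 v3 x1 x2, σ x1 = x1 → σ x2 = x2 → x1 ≠ 0 → x2 ≠ 0 → x1 ≠ x2 →
      (∀ x, σ x = x → x ≠ 0 → tr (w2*x^2+w1*x+w0+w3*(1/x)+w4*(1/x)^2)+(v1*x+v0+v3*(1/x))
        = if x = x1 ∨ x = x2 then 1 else 0) → False)
    (hpoly : ∀ r r', r * σ r ≠ 1 → r' * σ r' ≠ 1 → r + r' ≠ 0 → ∀ l l' k0,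
      (∀ t, t * σ t = 1 → tr (l/(t+r)+l'/(t+r')) = k0) → l = 0)
    (hsq : ∀ x : F, ∃ y, y^2 = x) (h90 : ∀ t, t * σ t = 1 → ∃ v, v ≠ 0 ∧ σ v = t * v)
    (hcomm : ∀ x, σ (tr x) = tr (σ x)) :
    ∃ c N, σ c = u^2*c ∧ u*a = u^2*c+1+u^2 ∧ k = u^2*c+1 ∧ N ≠ 1 ∧ N^3 = 1 ∧ σ N = N := by
  have h2' : (2:F) = 0 := CharTwo.two_eq_zero
  have hu0 : u ≠ 0 := left_ne_zero_of_mul_eq_one hu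
  obtain ⟨c, hc⟩ : ∃ c, c = σ k + 1 := ⟨_, rfl⟩
  have hsc : σ c = k + 1 := by rw [hc]; simp [h.inv]
  have hk1 : k = σ c + 1 := by linear_combination -hsc - h2'
  by_cases hc0 : c = 0
  · exfalso
    have hk : k = 1 := by rw [hk1, hc0]; simp
    subst hk
    refine AX.L4 h 1 (by simp) ?_ ?_ <;> simp only [map_mul, ha, map_one] <;> grind
  have hsc0 : σ c ≠ 0 := by simpa using hc0
  have hke : k + 1 = (σ k + 1) * (σ c / c) := by
    rw [← hsc, ← hc]; field_simp
  obtain ⟨n, hn⟩ : ∃ n, n = σ c / c := ⟨_, rfl⟩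
  have hn0 : n ≠ 0 := by rw [hn]; exact div_ne_zero hsc0 hc0
  have hnU : n * σ n = 1 := by rw [hn, map_div₀, h.inv]; field_simp
  have hcn : σ c = c * n := by rw [hn]; field_simp
  obtain ⟨e, he⟩ : ∃ e, e = c * σ c + c + σ c := ⟨_, rfl⟩
  have hse : σ e = e := by rw [he]; simp [h.inv]; ring
  have L4' : ∀ t t', t * σ t = 1 → t * t' = n → a * (t+t') = k + n →
      (u = t ∨ t^2 = u*t') → False := by
    intro t t' ht htn hat ho
    have eu : σ u = 1/u := by field_simp; linear_combination hu
    have hk' : k = c * n + 1 := by rw [hk1, hcn]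
    have hsk : σ k = c + 1 := by rw [hc]; linear_combination - h2'
    refine AX.L4 h t ht ?_ ?_
    · simp only [map_mul, ha, eu, hsk]
      field_simp
      grind
    · simp only [map_mul, ha, eu, hsk]
      field_simp
      rcases ho with ho | ho
      · grind
      · grind
  by_cases he0 : e = 0
  · exfalso
    obtain ⟨r, hr⟩ := hsq n
    have hrU : r * σ r = 1 := by
      have : (r * σ r + 1)^2 = 0 := by
        have : r^2 * (σ r)^2 = 1 := by rw [← map_pow, hr]; exact hnU
        linear_combination this + (r * σ r + 1) * h2'
      have := pow_eq_zero_iff (by norm_num) |>.1 this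
      linear_combination this - h2'
    have hkr : k = n := by
      have : c * (k + n) = 0 := by
        rw [hk1, hcn] at *
        rw [he0] at he
        linear_combination -he
      have := (mul_eq_zero.1 this).resolve_left hc0
      linear_combination this - n * h2'
    by_cases hur : u = r
    · refine L4' r r hrU (by rw [← hr]; ring) ?_ (Or.inl hur)
      rw [hkr]; linear_combination (a*r-n) * h2'
    · exact AX.double h hu hrU (by rw [hkr, ← hr]; ring) hur K hK hsum hsq h90
  obtain ⟨p, hp⟩ : ∃ p, p = e / (a * c) := ⟨_, rfl⟩
  have hp0 : p ≠ 0 := by rw [hp]; exact div_ne_zero he0 (mul_ne_zero ha0 hc0)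
  have hsp : σ p * n = p := by
    rw [hp, map_div₀, map_mul, hse, ha, hcn]; field_simp
  obtain ⟨w, hw⟩ : ∃ w, w^2 + w = n / p^2 := by
    apply h.as
    have : σ (n/p^2) = n/p^2 := by
      have e1 : σ n = 1/n := by field_simp; linear_combination hnU
      have e2 : σ p = p/n := by field_simp; linear_combination hsp
      rw [map_div₀, map_pow, e1, e2]; field_simp
    rw [hcomm, this]; linear_combination tr (n/p^2) * h2'
  obtain ⟨r, hr⟩ : ∃ r, r = p * w := ⟨_, rfl⟩
  obtain ⟨r', hr'⟩ : ∃ r', r' = p * w + p := ⟨_, rfl⟩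
  have hrp : r + r' = p := by rw [hr, hr']; linear_combination p*w*h2'
  have hrn : r * r' = n := by
    have : p^2*(w^2+w) = n := by rw [hw]; field_simp
    rw [hr, hr']; linear_combination this
  have hd : r + r' ≠ 0 := by rw [hrp]; exact hp0
  have hak : a * (r + r') = k + n := by
    have : a * p * c = e := by rw [hp]; field_simp
    have : c * (a * p) = c * (k + n) := by
      rw [hk1]; rw [hcn] at *; linear_combination this + he
    rw [hrp]; exact mul_left_cancel₀ hc0 this
  have hak' : a * (r + r') = k + r * r' := by rw [hrn]; exact hak
  have hr0 : r ≠ 0 := fun hh => hn0 (by rw [← hrn, hh, zero_mul])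
  have hr'0 : r' ≠ 0 := fun hh => hn0 (by rw [← hrn, hh, mul_zero])
  have hpr : (r * σ r + 1) * (r' * σ r + 1) = 0 := by
    have e1 : σ r + σ r' = σ p := by rw [← map_add, hrp]
    have e2 : σ r * σ r' = σ n := by rw [← map_mul, hrn]
    have e3 : n * (σ r)^2 + p * σ r + 1 = 0 := by
      have : σ r * (σ r + σ p) = σ n := by rw [← e2, ← e1]; linear_combination (σ r)^2 * h2'
      linear_combination n * this + hnU - σ r * hsp + h2'
    linear_combination e3 + (σ r)^2 * hrn + σ r * hrp
  by_cases hrU : r * σ r = 1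
  · exfalso
    have hr'U : r' * σ r' = 1 := by
      have : (r * σ r) * (r' * σ r') = 1 := by
        rw [← hnU, ← hrn, map_mul]; ring
      rwa [hrU, one_mul] at this
    by_cases c1 : u = r
    · exact L4' r r' hrU hrn hak (Or.inl c1)
    by_cases c2 : u = r'
    · exact L4' r' r hr'U (by rw [← hrn]; ring) (by rw [← hak]; ring) (Or.inl c2)
    by_cases c3 : r^2 = u*r'
    · exact L4' r r' hrU hrn hak (Or.inr c3)
    by_cases c4 : r'^2 = u*r
    · exact L4' r' r hr'U (by rw [← hrn]; ring) (by rw [← hak]; ring) (Or.inr c4)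
    exact AX.split h hu hrU hr'U hak' hd c1 c2 c3 c4 hmom hsq h90
  · have hx : r' * σ r = 1 := by
      rcases mul_eq_zero.1 hpr with hh | hh
      · exact absurd (by linear_combination hh - h2') hrU
      · linear_combination hh - h2'
    have hx' : r * σ r' = 1 := by
      have := congrArg σ hx
      rw [map_mul, h.inv, map_one] at this
      linear_combination this
    have hr'U : r' * σ r' ≠ 1 := by
      intro hh
      apply hrU
      have : (r * σ r) * (r' * σ r') = 1 := by
        linear_combination (r * σ r') * hx + hx'
      rwa [hh, mul_one] at this
    have hmain := AX.nonsplit h hu hx hx' hrU hak' hd (hpoly r r' hrU hr'U hd) hsq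
    have hmain' : r'^2 = u * r := by
      have := congrArg σ hmain
      rw [map_mul, map_pow] at this
      have : (σ r)^2 * (r' ^2 * u * r) = σ u * σ r' * (r'^2 * u * r) := by rw [this]
      linear_combination -r'^2*(r*σ r'*hu + hx') + u*r*(σ r*r'+1)*hx - this
    have hpu : r + r' = u := by
      have : (r + r') * (r + r' + u) = 0 := by linear_combination hmain + hmain' + (r * r'+u*r+u*r') * h2'
      have := (mul_eq_zero.1 this).resolve_left hd
      linear_combination this - u * h2'
    have hnu : r * r' = u^2 := by
      have : r * (r * r' + u^2) = 0 := by linear_combination r' * hmain + u * hmain' + u^2*r*h2'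
      have := (mul_eq_zero.1 this).resolve_left hr0
      linear_combination this - u^2 * h2'
    have hnu' : n = u^2 := by rw [← hrn, hnu]
    have hk' : k = u^2*c+1 := by rw [hk1, hcn, hnu']; ring
    refine ⟨c, r * σ r, ?_, ?_, hk', hrU, ?_, ?_⟩
    · rw [hcn, hnu']; ring
    · rw [← hpu, ← hpu] at *
      rw [hpu] at *
      rw [hk', hnu'] at hak
      linear_combination hak
    · have e1 : r^2 * σ r = u := by rw [hmain]; linear_combination u * hx
      have e2 : (σ r)^2 * r = σ u := by
        have := congrArg σ e1
        rw [map_mul, map_pow, h.inv] at this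
        exact this
      calc (r * σ r)^3 = (r^2 * σ r) * ((σ r)^2 * r) := by ring
        _ = 1 := by rw [e1, e2, hu]
    · rw [map_mul, h.inv]; ring

/-- If `f(x) = x^{3q} + a₁x^{2q+1} + a₂x^{q+2} + a₃x³` with `a₁ ∈ 𝔽_q`, `a₂ ≠ 0`,
`a₁/a₂ ∈ U` is APN, then `m` is even and either all coefficients lie in `𝔽_q` or they have
the stated parametric form with `u, z ∈ U`. Here `q = 2^m`, `m ≥ 4`,
`U = {z : z^(q+1) = 1}`, and `a ∈ 𝔽_q` is expressed as `a^(2^m) = a`. -/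
theorem kim_type_ratio_in_unit_circle
    (m : ℕ) (hm : 4 ≤ m) (F : Type*) [Field F] [Fintype F]
    (hcard : Fintype.card F = 2 ^ (2 * m))
    (a₁ a₂ a₃ : F) (ha₁ : a₁ ^ (2 ^ m) = a₁) (ha₂ : a₂ ≠ 0)
    (hU : (a₁ / a₂) ^ (2 ^ m + 1) = 1)
    (f : F → F)
    (hf : ∀ x : F, f x = x ^ (3 * 2 ^ m) + a₁ * x ^ (2 * 2 ^ m + 1)
        + a₂ * x ^ (2 ^ m + 2) + a₃ * x ^ 3)
    (hAPN : IsAPN f) :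
    Even m ∧
      ((a₁ ^ (2 ^ m) = a₁ ∧ a₂ ^ (2 ^ m) = a₂ ∧ a₃ ^ (2 ^ m) = a₃) ∨
        ∃ u z : F, u ^ (2 ^ m + 1) = 1 ∧ z ^ (2 ^ m + 1) = 1 ∧
          a₁ = (u ^ 3 + z) ^ 2 / (u * (u ^ 2 + z) ^ 2) ∧
          a₂ = (u ^ 3 + z) ^ 2 / (u ^ 2 + z) ^ 2 ∧
          a₃ = u * z ^ 2 * (u + 1) ^ 2 / (u ^ 2 + z) ^ 2) := by
  classical
  have hch : CharP F 2 := by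
    obtain ⟨p, hp⟩ := CharP.exists F
    obtain ⟨n, hpp, hpn⟩ := FiniteField.card F p
    have : p ∣ 2 ^ (2*m) := by rw [← hcard, hpn]; exact dvd_pow_self _ n.pos.ne'
    have := (Nat.prime_dvd_prime_iff_eq hpp Nat.prime_two).1 (hpp.dvd_of_dvd_pow this)
    rw [this] at hp; exact hp
  have h2' : (2:F) = 0 := CharTwo.two_eq_zero
  obtain ⟨σ, hσ⟩ : ∃ σ : F →+* F, ∀ x, σ x = x^(2^m) :=
    ⟨iterateFrobenius F 2 m, fun x => iterateFrobenius_def 2 m x⟩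
  have hinv : ∀ x, σ (σ x) = x := by
    intro x
    rw [hσ, hσ, ← pow_mul, ← pow_add, ← two_mul, ← hcard, FiniteField.pow_card]
  have hUiff : ∀ x : F, x^(2^m+1) = 1 ↔ x * σ x = 1 := by
    intro x; rw [hσ, pow_succ']
  have h90 := AX.h90' σ hinv
  obtain ⟨⟨g, hg⟩, ⟨g', hg'⟩⟩ := AX.gen (F := F) m hm hcard
  have h16 : 16 ≤ 2^m := by
    calc 16 = 2^4 := by norm_num
      _ ≤ 2^m := Nat.pow_le_pow_right (by norm_num) hm
  have hgs : σ g = g := by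
    have := pow_orderOf_eq_one g
    rw [hg] at this
    rw [hσ]
    calc g^(2^m) = g^(2^m-1+1) := by congr 1; omega
      _ = g := by rw [pow_succ, this, one_mul]
  have ha : σ a₁ = a₁ := by rw [hσ]; exact ha₁
  have ha0 : a₁ ≠ 0 := by
    rintro rfl
    rw [zero_div, zero_pow (by omega)] at hU
    exact zero_ne_one hU
  obtain ⟨u, hua⟩ : ∃ u, u = a₂ / a₁ := ⟨_, rfl⟩
  have ha₂u : a₂ = u * a₁ := by rw [hua]; field_simp
  have hu : u * σ u = 1 := by
    rw [hUiff, map_div₀] at hU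
    have : σ a₂ ≠ 0 := by simpa using ha₂
    rw [hua, map_div₀]
    have ha0' : σ a₁ ≠ 0 := by simpa using ha0
    field_simp at hU ⊢
    exact hU.symm
  have hu0 : u ≠ 0 := left_ne_zero_of_mul_eq_one hu
  obtain ⟨k, hk⟩ : ∃ k, k = a₃ / u := ⟨_, rfl⟩
  have ha₃k : a₃ = u * k := by rw [hk]; field_simp
  have hcomm : ∀ x, σ (AX.tr F m x) = AX.tr F m (σ x) := by
    intro x
    rw [AX.tr_apply, AX.tr_apply, map_sum]
    simp only [map_pow]
  have ctx : AX.Ctx σ (AX.tr F m) a₁ (u*a₁) (u*k) := by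
    refine ⟨hinv, ?_, AX.tr2' m, ?_, ?_, ?_⟩
    · intro y; rw [AX.tr1', hσ]
    · intro y hy
      refine AX.as' (2*m) (by omega) hcard y ?_
      rw [AX.tr_add, ← hσ]; exact hy
    · rw [← ha₂u, ← ha₃k]
      intro t y ht hy
      by_contra hne
      push Not at hne
      obtain ⟨v, hv0, hv⟩ := h90 t ht
      have hf' : ∀ x, f x = (σ x)^3 + a₁*(σ x)^2*x + a₂*σ x*x^2 + a₃*x^3 := by
        intro x; rw [hf, hσ]; ring
      have hle := hAPN v hv0 (f v)
      have hf0 : f 0 = 0 := by rw [hf']; simp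
      have hsub : (({0, v, v*y} : Finset F) : Set F) ⊆ {x : F | f (x+v) + f x = f v} := by
        intro x hx
        simp only [Finset.coe_insert, Finset.coe_singleton, Set.mem_insert_iff,
          Set.mem_singleton_iff] at hx
        show f (x+v) + f x = f v
        rcases hx with rfl | rfl | rfl
        · rw [hf0, zero_add, add_zero]
        · have : x + x = 0 := by linear_combination x * h2'
          rw [this, hf0, zero_add]
        · rw [hf', hf', hf']
          simp only [map_add, map_mul, hv]
          generalize σ y = Y at *
          linear_combination v^3 * hy + v^3*(t^3*(Y^3+Y^2+Y) + a₁*t^2*(Y^2*y+Y*y+Y) + a₂*t*(Y*y^2+Y*y+y) + a₃*(y^3+y^2+y))*h2'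
      have h3 : ({0, v, v*y} : Finset F).card = 3 := by
        rw [Finset.card_eq_three]
        refine ⟨0, v, v*y, hv0.symm, ?_, ?_, rfl⟩
        · exact (mul_ne_zero hv0 hne.1).symm
        · intro h
          apply hne.2
          have : v * (y - 1) = 0 := by linear_combination -h
          linear_combination (mul_eq_zero.1 this).resolve_left hv0
      have := Set.ncard_le_ncard hsub (Set.toFinite _)
      rw [Set.ncard_coe_finset, h3] at this
      omega
    · refine ⟨g, hgs, ?_, ?_⟩
      · rintro rfl; simp at hg; omega
      · rintro rfl; simp at hg; omega
  obtain ⟨c, N, hc, hac, hkc, hN1, hN3, hN⟩ := AX.main ctx hu ha ha0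
    (Finset.univ.filter fun x => σ x = x) (by simp)
    (fun η X j hj => AX.hsum' σ m hm g hg hgs _ (by simp) η X j hj)
    (fun w2 w1 w0 w3 w4 v1 v0 v3 x1 x2 hx1 hx2 h01 h02 h12 H =>
      AX.hmom' σ m hm g hg hgs w2 w1 w0 w3 w4 v1 v0 v3 x1 x2 hx1 hx2 h01 h02 h12 _ H)
    (fun r r' hr hr' hd l l' k0 H => AX.hpoly' m hm g' hg' r r' (by rwa [← hσ]) (by rwa [← hσ]) hd
      l l' k0 (fun t ht => H t (by rwa [hσ])))
    AX.hsq' h90 hcomm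
  constructor
  · by_contra hodd
    rw [Nat.not_even_iff_odd] at hodd
    obtain ⟨s, hs⟩ := hodd
    have h4 : (4:ℕ)^s % 3 = 1 := by
      rw [Nat.pow_mod]; simp
    have h5 : 2^m = 3 * (2*(4^s/3)) + 2 := by
      rw [hs, pow_succ, pow_mul]
      norm_num
      omega
    have hN0 : N ≠ 0 := by
      rintro rfl; simp at hN3
    have h6 : N^2 = N := by
      rw [hσ, h5, pow_add, pow_mul, hN3, one_pow, one_mul] at hN
      exact hN
    apply hN1
    have : N * (N - 1) = 0 := by linear_combination h6
    linear_combination (mul_eq_zero.1 this).resolve_left hN0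
  · by_cases hu1 : u = 1
    · left
      refine ⟨ha₁, ?_, ?_⟩
      · rw [ha₂u, hu1, one_mul]; exact ha₁
      · rw [ha₃k, hu1, one_mul, ← hσ, hkc, hu1]
        rw [hu1] at hc
        simp [hc]
    · right
      obtain ⟨κ, hκ⟩ := AX.hsq' c
      have hsu : σ u = 1/u := by field_simp; linear_combination hu
      have hsκ : σ κ = u * κ := by
        have : (σ κ + u*κ)^2 = 0 := by
          have : (σ κ)^2 = u^2*κ^2 := by rw [← map_pow, hκ, hc]
          linear_combination this + (σ κ * u * κ + u^2*κ^2) * h2'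
        have := pow_eq_zero_iff (by norm_num) |>.1 this
        linear_combination this - u*κ*h2'
      have hκ1 : κ + 1 ≠ 0 := by
        intro h
        have : κ = 1 := by linear_combination h - h2'
        rw [this, map_one, mul_one] at hsκ
        exact hu1 hsκ.symm
      have hκ2 : u*κ + 1 ≠ 0 := by
        intro h
        apply hκ1
        have : σ (κ + 1) = 0 := by rw [map_add, hsκ, map_one, h]
        exact (map_eq_zero σ).1 this
      have huu : u + 1 ≠ 0 := fun h => hu1 (by linear_combination h - h2')
      obtain ⟨z, hz⟩ : ∃ z, z = u*(u*κ+1)/(κ+1) := ⟨_, rfl⟩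
      have hzz : u^2 + z = u*(u+1)/(κ+1) := by
        rw [hz]; field_simp; linear_combination u*κ*h2'
      have hzz3 : u^3 + z = u*(u+1)*(u*κ+u+1)/(κ+1) := by
        rw [hz]; field_simp; linear_combination -u * h2'
      have hac' : u * a₁ = (u*κ+u+1)^2 := by
        rw [hac, ← hκ]; linear_combination -(u^2*κ+u*κ+u) * h2'
      refine ⟨u, z, (hUiff u).2 hu, (hUiff z).2 ?_, ?_, ?_, ?_⟩
      · rw [hz]
        simp only [map_div₀, map_mul, map_add, map_one, hsκ, hsu]
        field_simp
      · rw [hzz, hzz3]; field_simp; linear_combination hac'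
      · rw [hzz, hzz3, ha₂u, hac']; field_simp
      · rw [hzz, hz, ha₃k, hkc, ← hκ]; field_simp
        linear_combination -u*κ*h2'
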